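/- Let σ be a split rule and VarGain(S,σ) = var(S) − (|S₀|/|S|)var(S₀) − (|S₁|/|S|)var(S₁) with (S₀,S₁) = σ(S), where all labels lie in [−2c, 2c]. Then |VarGain(S,σ) − VarGain(S',σ)| ≤ 36c²·ED*(S,S') for all nonempty finite multisets S, S'. -/

import Mathlib

/-- Edit distance (symmetric difference size) of two multisets. -/
def symmDist {α : Type*} [DecidableEq α] (S S' : Multiset α) : ℕ :=
  (S - S').card + (S' - S).card

/-- Relative edit distance `ED*(S,S') = △(S,S') / max(|S|,|S'|)`. -/
noncomputable def edStar {α : Type*} [DecidableEq α] (S S' : Multiset α) : ℝ :=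
  (symmDist S S' : ℝ) / ((max S.card S'.card : ℕ) : ℝ)

/-- Label variance `var(S) = (1/|S|²) Σ_{y,y'∈S}(y−y')²` of a multiset of examples
with labels `lab : α → ℝ` (sum over ordered pairs). -/
noncomputable def varOf {α : Type*} (lab : α → ℝ) (S : Multiset α) : ℝ :=
  ((S.map lab).bind fun y => (S.map lab).map fun y' => (y - y') ^ 2).sum /
    (S.card : ℝ) ^ 2

/-- Variance gain of a split rule `σ` on `S`. -/
noncomputable def varGain {α : Type*} (lab : α → ℝ) (σ : α → Bool)
    (S : Multiset α) : ℝ :=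
  varOf lab S
    - ((S.filter fun x => σ x = false).card : ℝ) / (S.card : ℝ) *
        varOf lab (S.filter fun x => σ x = false)
    - ((S.filter fun x => σ x = true).card : ℝ) / (S.card : ℝ) *
        varOf lab (S.filter fun x => σ x = true)

/-!
Write `W S` for the sum of squared deviations of the labels of `S` from their mean, and
`B S = W S - ∑ j, W S_j ≥ 0` for the between-class sum of squares, so that `|S| · VarGain = 2 B S`.
Let all labels lie in `[-b, b]`. Adding a multiset `X` to `S` raises `W S` by at most `4 b² |X|`
and does not lower any `W S_j`, so `B (S + X) ≤ B S + 4 b² |X|`. In the other direction, merging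
the class `X_j` (mean `y_j`) into `S_j` (mean `m_j`) costs `h_j (m_j - y_j)²` with
`h_j = |S_j| |X_j| / (|S_j| + |X_j|)`. Let `m` be the mean of `S`; bounding the shift of the overall
mean by Titu's inequality gives `B (S + X) ≥ B S + ∑ j, h_j ((y_j - m)² - (y_j - m_j)²)`.
Since `B S ≤ |S| (b² - m²)`, it follows that the variance gain falls by at most
`9 b² |X| / |S + X|`. The two bounds combine by passing from `S` to `S'` through `S ∩ S'` or
through `S + (S' - S) = S' + (S - S')`.
-/

lemma sum_map_le_card_mul {α : Type*} {S : Multiset α} {f : α → ℝ} {r : ℝ}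
    (hf : ∀ a ∈ S, f a ≤ r) :
    (S.map f).sum ≤ S.card * r := by
  simpa using Multiset.sum_le_card_nsmul (S.map f) r (by simpa using hf)

section Deviations

variable {α : Type*} (lab : α → ℝ)

/-- The average label of `S`, with the value `0` when `S` is empty. -/
noncomputable def labelMean (S : Multiset α) : ℝ :=
  (S.map lab).sum / S.card

/-- The sum of the squared deviations of the labels of `S` from their mean, that is `|S|` times
the variance in the usual normalization (half of `varOf`). -/
noncomputable def sumSqDev (S : Multiset α) : ℝ :=
  (S.map fun a => (lab a - labelMean lab S) ^ 2).sum

@[simp]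
lemma labelMean_zero : labelMean lab 0 = 0 := by
  simp [labelMean]

@[simp]
lemma sumSqDev_zero : sumSqDev lab 0 = 0 := by
  simp [sumSqDev]

lemma card_mul_labelMean (S : Multiset α) : S.card * labelMean lab S = (S.map lab).sum := by
  rcases eq_or_ne S 0 with rfl | hS
  · simp
  · exact mul_div_cancel₀ _ (by simpa using hS)

lemma sumSqDev_nonneg (S : Multiset α) : 0 ≤ sumSqDev lab S :=
  Multiset.sum_nonneg fun _ h => by
    obtain ⟨a, -, rfl⟩ := Multiset.mem_map.1 h
    positivity

lemma sum_map_sub_sq (S : Multiset α) (t : ℝ) :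
    (S.map fun a => (lab a - t) ^ 2).sum =
      sumSqDev lab S + S.card * (labelMean lab S - t) ^ 2 := by
  have expand (a : α) : (lab a - t) ^ 2 = (lab a - labelMean lab S) ^ 2 +
      (2 * (labelMean lab S - t) * (lab a - labelMean lab S) + (labelMean lab S - t) ^ 2) := by
    ring
  have centred : (S.map fun a => lab a - labelMean lab S).sum = 0 := by
    simp [Multiset.sum_map_sub, card_mul_labelMean]
  simp only [expand, Multiset.sum_map_add, Multiset.sum_map_mul_left, centred]
  simp [sumSqDev]

lemma labelMean_add_sub_mul (S X : Multiset α) (t : ℝ) :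
    (S + X).card * (labelMean lab (S + X) - t) =
      S.card * (labelMean lab S - t) + X.card * (labelMean lab X - t) := by
  have h := card_mul_labelMean lab (S + X)
  rw [Multiset.map_add, Multiset.sum_add, ← card_mul_labelMean, ← card_mul_labelMean] at h
  rw [mul_sub, h, Multiset.card_add, Nat.cast_add]
  ring

lemma sumSqDev_add (S X : Multiset α) :
    sumSqDev lab (S + X) = sumSqDev lab S + sumSqDev lab X +
      S.card * X.card / (S.card + X.card) * (labelMean lab S - labelMean lab X) ^ 2 := by
  rcases eq_or_ne (S + X) 0 with hSX | hSX
  · obtain ⟨rfl, rfl⟩ := add_eq_zero.1 hSX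
    simp
  have hcard : (S.card + X.card : ℝ) ≠ 0 := by
    exact_mod_cast (Multiset.card_add S X ▸ Multiset.card_pos.2 hSX).ne'
  have hmean := labelMean_add_sub_mul lab S X (labelMean lab S)
  have hdev := sum_map_sub_sq lab (S + X) (labelMean lab S)
  rw [Multiset.map_add, Multiset.sum_add, sum_map_sub_sq, sum_map_sub_sq] at hdev
  simp only [Multiset.card_add, Nat.cast_add, sub_self, mul_zero, zero_add] at hmean hdev
  rw [mul_comm, ← eq_div_iff hcard] at hmean
  rw [hmean] at hdev
  field_simp at hdev ⊢
  linear_combination -hdev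

lemma sumSqDev_le_sumSqDev_add (S X : Multiset α) : sumSqDev lab S ≤ sumSqDev lab (S + X) := by
  have := sumSqDev_nonneg lab X
  rw [sumSqDev_add]
  have : 0 ≤ (S.card * X.card / (S.card + X.card) : ℝ) *
    (labelMean lab S - labelMean lab X) ^ 2 := by positivity
  linarith

lemma card_mul_varOf (S : Multiset α) : S.card * varOf lab S = 2 * sumSqDev lab S := by
  have inner (a : α) : (S.map fun a' => (lab a - lab a') ^ 2).sum =
      sumSqDev lab S + S.card * (lab a - labelMean lab S) ^ 2 := by
    rw [sub_sq_comm (lab a) (labelMean lab S), ← sum_map_sub_sq]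
    simp only [sub_sq_comm (lab a)]
  rcases eq_or_ne S 0 with rfl | hS
  · simp
  · have hcard : (S.card : ℝ) ≠ 0 := by simpa using hS
    simp only [varOf, Multiset.sum_bind, Multiset.map_map, Function.comp_def, inner,
      Multiset.sum_map_add, Multiset.map_const', Multiset.sum_replicate, nsmul_eq_mul,
      Multiset.sum_map_mul_left, ← sumSqDev.eq_def]
    field_simp
    ring

variable {lab} {b : ℝ}

lemma sumSqDev_le (hlab : ∀ a, lab a ^ 2 ≤ b ^ 2) (S : Multiset α) :
    sumSqDev lab S ≤ S.card * (b ^ 2 - labelMean lab S ^ 2) := by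
  have h := sum_map_le_card_mul fun a (_ : a ∈ S) => hlab a
  have hsq := sum_map_sub_sq lab S 0
  simp only [sub_zero] at hsq
  linarith

lemma labelMean_sq_le (hlab : ∀ a, lab a ^ 2 ≤ b ^ 2) (S : Multiset α) :
    labelMean lab S ^ 2 ≤ b ^ 2 := by
  rcases eq_or_ne S 0 with rfl | hS
  · simpa using sq_nonneg b
  · have hcard : (0 : ℝ) < S.card := by exact_mod_cast Multiset.card_pos.2 hS
    exact sub_nonneg.1 <| nonneg_of_mul_nonneg_right
      ((sumSqDev_nonneg lab S).trans (sumSqDev_le hlab S)) hcard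

lemma sumSqDev_add_le (hlab : ∀ a, lab a ^ 2 ≤ b ^ 2) (S X : Multiset α) :
    sumSqDev lab (S + X) ≤ sumSqDev lab S + 4 * b ^ 2 * X.card := by
  set m := labelMean lab S
  have hX : (X.map fun a => (lab a - m) ^ 2).sum ≤ X.card * (4 * b ^ 2) :=
    sum_map_le_card_mul fun a _ => by
      nlinarith [hlab a, labelMean_sq_le hlab S, sq_nonneg (lab a + m)]
  calc sumSqDev lab (S + X)
      ≤ ((S + X).map fun a => (lab a - m) ^ 2).sum := by
        rw [sum_map_sub_sq]
        exact le_add_of_nonneg_right (by positivity)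
    _ = sumSqDev lab S + (X.map fun a => (lab a - m) ^ 2).sum := by
        rw [Multiset.map_add, Multiset.sum_add, ← sumSqDev.eq_def]
    _ ≤ sumSqDev lab S + 4 * b ^ 2 * X.card := by linarith

end Deviations

section ClassSums

variable {ι : Type*} (s : Finset ι) {n x : ι → ℝ}

-- Unlike in `Finset.sq_sum_div_le_sum_sq_div`, the denominators may vanish.
lemma sq_sum_mul_div_le (hn : ∀ i ∈ s, 0 ≤ n i) (hx : ∀ i ∈ s, 0 ≤ x i) (e : ι → ℝ) :
    (∑ i ∈ s, x i * e i) ^ 2 / ∑ i ∈ s, (n i + x i) ≤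
      ∑ i ∈ s, (x i * e i) ^ 2 / (n i + x i) := by
  have hnx (i) (hi : i ∈ s) : 0 ≤ n i + x i := add_nonneg (hn i hi) (hx i hi)
  have hterm (i) (hi : i ∈ s) : 0 ≤ (x i * e i) ^ 2 / (n i + x i) :=
    div_nonneg (sq_nonneg _) (hnx i hi)
  refine div_le_of_le_mul₀ (Finset.sum_nonneg hnx) (Finset.sum_nonneg hterm) <|
    s.sum_sq_le_sum_mul_sum_of_sq_le_mul hterm hnx fun i hi => ?_
  rcases (hnx i hi).eq_or_lt with h | h
  · have hxi : x i = 0 := by linarith [hn i hi, hx i hi]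
    simp [hxi]
  · rw [div_mul_cancel₀ _ h.ne']

lemma mul_div_add_mul_sq_add {p q : ℝ} (hp : 0 ≤ p) (hq : 0 ≤ q) (e : ℝ) :
    p * q / (p + q) * e ^ 2 + (q * e) ^ 2 / (p + q) = q * e ^ 2 := by
  rcases (add_nonneg hp hq).eq_or_lt with h | h
  · obtain rfl : q = 0 := by linarith
    simp
  · field_simp

lemma sum_mul_div_add_mul_sq_add_le (hn : ∀ i ∈ s, 0 ≤ n i) (hx : ∀ i ∈ s, 0 ≤ x i)
    (e : ι → ℝ) :
    ∑ i ∈ s, n i * x i / (n i + x i) * e i ^ 2 +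
      (∑ i ∈ s, x i * e i) ^ 2 / ∑ i ∈ s, (n i + x i) ≤ ∑ i ∈ s, x i * e i ^ 2 := by
  calc _ ≤ ∑ i ∈ s, n i * x i / (n i + x i) * e i ^ 2 +
          ∑ i ∈ s, (x i * e i) ^ 2 / (n i + x i) :=
        add_le_add_right (sq_sum_mul_div_le s hn hx e) _
    _ = ∑ i ∈ s, x i * e i ^ 2 := by
        rw [← Finset.sum_add_distrib]
        exact Finset.sum_congr rfl fun i hi => mul_div_add_mul_sq_add (hn i hi) (hx i hi) (e i)

end ClassSums

section Split

variable {α ι : Type*} [DecidableEq ι]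

/-- The elements of `S` that the split rule `σ` sends to class `j`. -/
def splitClass (σ : α → ι) (j : ι) (S : Multiset α) : Multiset α :=
  S.filter fun a => σ a = j

lemma splitClass_zero (σ : α → ι) (j : ι) : splitClass σ j 0 = 0 :=
  Multiset.filter_zero _

lemma splitClass_add (σ : α → ι) (j : ι) (S X : Multiset α) :
    splitClass σ j (S + X) = splitClass σ j S + splitClass σ j X :=
  Multiset.filter_add _ _ _

variable [Fintype ι] (lab : α → ℝ) (σ : α → ι)

lemma sum_sum_map_splitClass (f : α → ℝ) (S : Multiset α) :
    ∑ j, ((splitClass σ j S).map f).sum = (S.map f).sum := by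
  induction S using Multiset.induction_on with
  | empty => simp [splitClass_zero]
  | cons a S ih =>
    have hcons (j : ι) : ((splitClass σ j (a ::ₘ S)).map f).sum =
        (if σ a = j then f a else 0) + ((splitClass σ j S).map f).sum := by
      by_cases h : σ a = j <;> simp [splitClass, h]
    simp [hcons, Finset.sum_add_distrib, ih]

/-- The between-class sum of squares of the split `σ` of `S`: the total sum of squared deviations
minus those within the classes. -/
noncomputable def betweenSumSq (S : Multiset α) : ℝ :=
  sumSqDev lab S - ∑ j, sumSqDev lab (splitClass σ j S)

lemma sum_card_splitClass (S : Multiset α) :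
    ∑ j, ((splitClass σ j S).card : ℝ) = S.card := by
  simpa using sum_sum_map_splitClass σ (fun _ => (1 : ℝ)) S

lemma sum_card_mul_labelMean_splitClass_sub (S : Multiset α) (t : ℝ) :
    ∑ j, (splitClass σ j S).card * (labelMean lab (splitClass σ j S) - t) =
      S.card * (labelMean lab S - t) := by
  simp only [mul_sub, card_mul_labelMean, Finset.sum_sub_distrib, ← Finset.sum_mul,
    sum_card_splitClass, sum_sum_map_splitClass]

lemma sum_card_mul_labelMean_splitClass_sub_sq (S : Multiset α) (t : ℝ) :
    ∑ j, (splitClass σ j S).card * (labelMean lab (splitClass σ j S) - t) ^ 2 =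
      betweenSumSq lab σ S + S.card * (labelMean lab S - t) ^ 2 := by
  have h := sum_sum_map_splitClass σ (fun a => (lab a - t) ^ 2) S
  simp only [sum_map_sub_sq, Finset.sum_add_distrib] at h
  rw [betweenSumSq]
  linarith

lemma betweenSumSq_nonneg (S : Multiset α) : 0 ≤ betweenSumSq lab σ S := by
  have h := sum_card_mul_labelMean_splitClass_sub_sq lab σ S (labelMean lab S)
  rw [sub_self, zero_pow two_ne_zero, mul_zero, add_zero] at h
  exact h ▸ Finset.sum_nonneg fun j _ => by positivity

lemma betweenSumSq_add_sum_le (S X : Multiset α) :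
    betweenSumSq lab σ S + ∑ j, (splitClass σ j S).card * (splitClass σ j X).card /
        ((splitClass σ j S).card + (splitClass σ j X).card) *
        ((labelMean lab (splitClass σ j X) - labelMean lab S) ^ 2 -
          (labelMean lab (splitClass σ j S) - labelMean lab (splitClass σ j X)) ^ 2) ≤
      betweenSumSq lab σ (S + X) := by
  have titu := sum_mul_div_add_mul_sq_add_le Finset.univ
    (fun j _ => Nat.cast_nonneg (splitClass σ j S).card)
    (fun j _ => Nat.cast_nonneg (splitClass σ j X).card)
    (fun j => labelMean lab (splitClass σ j X) - labelMean lab S)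
  rw [sum_card_mul_labelMean_splitClass_sub, sum_card_mul_labelMean_splitClass_sub_sq,
    Finset.sum_add_distrib, sum_card_splitClass, sum_card_splitClass] at titu
  have hwhole := mul_div_add_mul_sq_add (Nat.cast_nonneg S.card) (Nat.cast_nonneg X.card)
    (labelMean lab X - labelMean lab S)
  rw [betweenSumSq, betweenSumSq]
  rw [betweenSumSq] at titu
  simp only [splitClass_add, sumSqDev_add, Finset.sum_add_distrib, mul_sub,
    Finset.sum_sub_distrib, sub_sq_comm (labelMean lab S) (labelMean lab X)]
  linarith

lemma betweenSumSq_add_le {b : ℝ} (hlab : ∀ a, lab a ^ 2 ≤ b ^ 2) (S X : Multiset α) :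
    betweenSumSq lab σ (S + X) ≤ betweenSumSq lab σ S + 4 * b ^ 2 * X.card := by
  have hclass : ∑ j, sumSqDev lab (splitClass σ j S) ≤
      ∑ j, sumSqDev lab (splitClass σ j (S + X)) :=
    Finset.sum_le_sum fun j _ => by
      simpa only [splitClass_add] using sumSqDev_le_sumSqDev_add lab _ _
  have hwhole := sumSqDev_add_le hlab S X
  unfold betweenSumSq
  linarith

lemma betweenSumSq_le {b : ℝ} (hlab : ∀ a, lab a ^ 2 ≤ b ^ 2) (S : Multiset α) :
    betweenSumSq lab σ S ≤ S.card * (b ^ 2 - labelMean lab S ^ 2) :=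
  (sub_le_self _ <| Finset.sum_nonneg fun _ _ => sumSqDev_nonneg lab _).trans
    (sumSqDev_le hlab S)

-- The left side is `(b ^ 2 - m ^ 2) - 9 / 2 * b ^ 2`, whose first term is the bound on the
-- between-class variance from `betweenSumSq_le`.
lemma neg_le_sq_sub_sub_sq {b y k : ℝ} (hy : y ^ 2 ≤ b ^ 2) (hk : k ^ 2 ≤ b ^ 2) (m : ℝ) :
    -(7 / 2 * b ^ 2 + m ^ 2) ≤ (y - m) ^ 2 - (k - y) ^ 2 := by
  nlinarith [sq_nonneg (y + k), sq_nonneg (y - 2 * m)]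

lemma betweenSumSq_sub_le_betweenSumSq_add {b : ℝ} (hlab : ∀ a, lab a ^ 2 ≤ b ^ 2)
    (S X : Multiset α) :
    betweenSumSq lab σ S - X.card * (7 / 2 * b ^ 2 + labelMean lab S ^ 2) ≤
      betweenSumSq lab σ (S + X) := by
  refine le_trans ?_ (betweenSumSq_add_sum_le lab σ S X)
  rw [sub_eq_add_neg, ← mul_neg, ← sum_card_splitClass σ X, Finset.sum_mul]
  refine add_le_add_right (Finset.sum_le_sum fun j _ => ?_) _
  set p : ℝ := ((splitClass σ j S).card : ℝ)
  set q : ℝ := ((splitClass σ j X).card : ℝ)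
  have hpq : p * q / (p + q) ≤ q :=
    div_le_of_le_mul₀ (by positivity) (by positivity) (by nlinarith [sq_nonneg q])
  calc q * -(7 / 2 * b ^ 2 + labelMean lab S ^ 2)
      ≤ p * q / (p + q) * -(7 / 2 * b ^ 2 + labelMean lab S ^ 2) :=
        mul_le_mul_of_nonpos_right hpq (neg_nonpos.2 (by positivity))
    _ ≤ _ := by
        gcongr
        exact neg_le_sq_sub_sub_sq (labelMean_sq_le hlab _) (labelMean_sq_le hlab _) _

/-- Variance gain of a split rule with finitely many classes, of which `varGain` is the two-class
case. -/
noncomputable def multiVarGain (S : Multiset α) : ℝ :=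
  varOf lab S - ∑ j, (splitClass σ j S).card / S.card * varOf lab (splitClass σ j S)

lemma varGain_eq_multiVarGain (σ : α → Bool) (S : Multiset α) :
    varGain lab σ S = multiVarGain lab σ S := by
  rw [varGain, multiVarGain, Fintype.sum_bool, splitClass, splitClass]
  ring

lemma card_mul_multiVarGain (S : Multiset α) :
    S.card * multiVarGain lab σ S = 2 * betweenSumSq lab σ S := by
  rcases eq_or_ne S 0 with rfl | hS
  · simp [betweenSumSq, splitClass_zero]
  have hcard : (S.card : ℝ) ≠ 0 := by simpa using hS
  simp only [multiVarGain, betweenSumSq, mul_sub, Finset.mul_sum, ← mul_assoc,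
    mul_div_cancel₀ _ hcard, card_mul_varOf]

lemma multiVarGain_zero : multiVarGain lab σ 0 = 0 := by
  simp [multiVarGain, varOf, splitClass_zero]

lemma multiVarGain_nonneg (S : Multiset α) : 0 ≤ multiVarGain lab σ S := by
  rcases eq_or_ne S 0 with rfl | hS
  · rw [multiVarGain_zero]
  have hcard : (0 : ℝ) < S.card := by exact_mod_cast Multiset.card_pos.2 hS
  refine nonneg_of_mul_nonneg_right ?_ hcard
  rw [card_mul_multiVarGain]
  exact mul_nonneg zero_le_two (betweenSumSq_nonneg lab σ S)

lemma multiVarGain_le {b : ℝ} (hlab : ∀ a, lab a ^ 2 ≤ b ^ 2) (S : Multiset α) :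
    multiVarGain lab σ S ≤ 2 * (b ^ 2 - labelMean lab S ^ 2) := by
  rcases eq_or_ne S 0 with rfl | hS
  · rw [multiVarGain_zero, labelMean_zero, zero_pow two_ne_zero, sub_zero]
    positivity
  have hcard : (0 : ℝ) < S.card := by exact_mod_cast Multiset.card_pos.2 hS
  refine le_of_mul_le_mul_left ?_ hcard
  linarith [card_mul_multiVarGain lab σ S, betweenSumSq_le lab σ hlab S]

lemma card_mul_multiVarGain_add_le {b : ℝ} (hlab : ∀ a, lab a ^ 2 ≤ b ^ 2) (S X : Multiset α) :
    (S + X).card * multiVarGain lab σ (S + X) ≤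
      S.card * multiVarGain lab σ S + 9 * b ^ 2 * X.card := by
  rw [card_mul_multiVarGain, card_mul_multiVarGain]
  have : 0 ≤ b ^ 2 * X.card := by positivity
  linarith [betweenSumSq_add_le lab σ hlab S X]

lemma card_add_mul_multiVarGain_le {b : ℝ} (hlab : ∀ a, lab a ^ 2 ≤ b ^ 2)
    (S X : Multiset α) :
    (S + X).card * multiVarGain lab σ S ≤
      (S + X).card * multiVarGain lab σ (S + X) + 9 * b ^ 2 * X.card := by
  have hX := mul_le_mul_of_nonneg_left (multiVarGain_le lab σ hlab S) (Nat.cast_nonneg X.card)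
  rw [card_mul_multiVarGain, Multiset.card_add, Nat.cast_add, add_mul, card_mul_multiVarGain]
  linarith [betweenSumSq_sub_le_betweenSumSq_add lab σ hlab S X]

end Split

section EditDistance

variable {α ι : Type*} [DecidableEq α] [DecidableEq ι] [Fintype ι] {lab : α → ℝ} (σ : α → ι)

lemma symmDist_comm (S S' : Multiset α) : symmDist S S' = symmDist S' S :=
  add_comm _ _

lemma edStar_comm (S S' : Multiset α) : edStar S S' = edStar S' S := by
  rw [edStar, edStar, symmDist_comm, max_comm]

lemma inter_add_sub (S S' : Multiset α) : S ∩ S' + (S - S') = S := by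
  rw [add_comm, Multiset.sub_add_inter]

lemma card_mul_multiVarGain_le_add_symmDist {b : ℝ} (hlab : ∀ a, lab a ^ 2 ≤ b ^ 2)
    (S S' : Multiset α) :
    S.card * multiVarGain lab σ S ≤
      S'.card * multiVarGain lab σ S' + 9 * b ^ 2 * symmDist S S' := by
  have hS := card_mul_multiVarGain_add_le lab σ hlab (S ∩ S') (S - S')
  have hS' := card_add_mul_multiVarGain_le lab σ hlab (S' ∩ S) (S' - S)
  rw [inter_add_sub] at hS hS'
  have hinter : ((S ∩ S').card : ℝ) * multiVarGain lab σ (S ∩ S') ≤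
      S'.card * multiVarGain lab σ (S ∩ S') :=
    mul_le_mul_of_nonneg_right (by exact_mod_cast Multiset.card_le_card Multiset.inter_le_right)
      (multiVarGain_nonneg lab σ _)
  rw [Multiset.inter_comm S' S] at hS'
  rw [symmDist, Nat.cast_add]
  linarith

lemma card_mul_multiVarGain_sub_le_symmDist {b : ℝ} (hlab : ∀ a, lab a ^ 2 ≤ b ^ 2)
    (S S' : Multiset α) :
    S'.card * (multiVarGain lab σ S - multiVarGain lab σ S') ≤ 9 * b ^ 2 * symmDist S S' := by
  have hS := card_add_mul_multiVarGain_le lab σ hlab S (S' - S)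
  have hS' := card_mul_multiVarGain_add_le lab σ hlab S' (S - S')
  have hunion : S' + (S - S') = S + (S' - S) := by
    ext a
    simp only [Multiset.count_add, Multiset.count_sub]
    omega
  have hcard : (S'.card : ℝ) * multiVarGain lab σ S ≤
      (S + (S' - S)).card * multiVarGain lab σ S :=
    mul_le_mul_of_nonneg_right
      (by exact_mod_cast Multiset.card_le_card (hunion ▸ Multiset.le_add_right S' _))
      (multiVarGain_nonneg lab σ S)
  rw [hunion] at hS'
  rw [symmDist, Nat.cast_add]
  linarith

lemma multiVarGain_sub_le_edStar {b : ℝ} (hlab : ∀ a, lab a ^ 2 ≤ b ^ 2)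
    (S S' : Multiset α) (hS : S ≠ 0) :
    multiVarGain lab σ S - multiVarGain lab σ S' ≤ 9 * b ^ 2 * edStar S S' := by
  have hmax : (0 : ℝ) < (max S.card S'.card : ℕ) := by
    exact_mod_cast lt_max_of_lt_left (Multiset.card_pos.2 hS)
  rw [edStar, ← mul_div_assoc, le_div_iff₀ hmax, mul_comm]
  rcases le_total S.card S'.card with hle | hle
  · rw [max_eq_right hle]
    exact card_mul_multiVarGain_sub_le_symmDist σ hlab S S'
  · rw [max_eq_left hle]
    have hcard : (S'.card : ℝ) * multiVarGain lab σ S' ≤ S.card * multiVarGain lab σ S' :=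
      mul_le_mul_of_nonneg_right (by exact_mod_cast hle) (multiVarGain_nonneg lab σ S')
    linarith [card_mul_multiVarGain_le_add_symmDist σ hlab S S']

end EditDistance

theorem stmt9_general {α ι : Type*} [DecidableEq α] [DecidableEq ι] [Fintype ι] (lab : α → ℝ)
    (σ : α → ι) (c : ℝ) (hb : ∀ a : α, |lab a| ≤ 2 * c)
    (S S' : Multiset α) (hS : S ≠ 0) (hS' : S' ≠ 0) :
    |multiVarGain lab σ S - multiVarGain lab σ S'| ≤ 36 * c ^ 2 * edStar S S' := by
  have hlab (a : α) : lab a ^ 2 ≤ (2 * c) ^ 2 := sq_le_sq.2 ((hb a).trans (le_abs_self _))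
  rw [show 36 * c ^ 2 = 9 * (2 * c) ^ 2 by ring, abs_sub_le_iff]
  refine ⟨multiVarGain_sub_le_edStar σ hlab S S' hS, ?_⟩
  rw [edStar_comm]
  exact multiVarGain_sub_le_edStar σ hlab S' S hS'

/-- Smoothness of the variance gain when all labels lie in `[−2c, 2c]`:
`|VarGain(S,σ) − VarGain(S',σ)| ≤ 36c²·ED*(S,S')`. -/
theorem stmt9 {α : Type*} [DecidableEq α] (lab : α → ℝ) (σ : α → Bool) (c : ℝ)
    (hb : ∀ a : α, |lab a| ≤ 2 * c)
    (S S' : Multiset α) (hS : S ≠ 0) (hS' : S' ≠ 0) :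
    |varGain lab σ S - varGain lab σ S'| ≤ 36 * c ^ 2 * edStar S S' := by
  simpa only [varGain_eq_multiVarGain] using stmt9_general lab σ c hb S S' hS hS'
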